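/- (Authentication of the initiator in Needham–Schroeder–Lowe.) If evs ∈ nsl, A ∉ bad, B ∉ bad, Says B A (Crypt (pubK A) ⟨Nonce NA, Nonce NB, Agent B⟩) ∈ set evs and Says A' B (Crypt (pubK B) (Nonce NB)) ∈ set evs for some agent A', then Says A B (Crypt (pubK B) ⟨Nonce NA, Agent A⟩) ∈ set evs, i.e. the run must have been initiated by A. -/

import Mathlib

inductive agent : Type
  | Server : agent
  | Friend : ℕ → agent
  | Spy : agent
deriving DecidableEq

inductive msg : Type
  | Agent : agent → msg
  | Number : ℕ → msg
  | Nonce : ℕ → msg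
  | Key : ℕ → msg
  | Hash : msg → msg
  | MPair : msg → msg → msg
  | Crypt : ℕ → msg → msg
deriving DecidableEq

inductive partsP (H : Set msg) : msg → Prop
  | Inj : ∀ X, X ∈ H → partsP H X
  | Fst : ∀ X Y, partsP H (msg.MPair X Y) → partsP H X
  | Snd : ∀ X Y, partsP H (msg.MPair X Y) → partsP H Y
  | Body : ∀ K X, partsP H (msg.Crypt K X) → partsP H X

/-- `parts H`: sub-components of messages of `H`. -/
def parts (H : Set msg) : Set msg := {X | partsP H X}

inductive analzP (invKey : ℕ → ℕ) (H : Set msg) : msg → Prop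
  | Inj : ∀ X, X ∈ H → analzP invKey H X
  | Fst : ∀ X Y, analzP invKey H (msg.MPair X Y) → analzP invKey H X
  | Snd : ∀ X Y, analzP invKey H (msg.MPair X Y) → analzP invKey H Y
  | Decrypt : ∀ K X, analzP invKey H (msg.Crypt K X) →
      analzP invKey H (msg.Key (invKey K)) → analzP invKey H X

/-- `analz invKey H`: what can be obtained by decomposing and decrypting messages of `H`. -/
def analz (invKey : ℕ → ℕ) (H : Set msg) : Set msg := {X | analzP invKey H X}

inductive synthP (H : Set msg) : msg → Prop
  | Inj : ∀ X, X ∈ H → synthP H X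
  | Ag : ∀ a, synthP H (msg.Agent a)
  | Num : ∀ n, synthP H (msg.Number n)
  | Hsh : ∀ X, synthP H X → synthP H (msg.Hash X)
  | Pr : ∀ X Y, synthP H X → synthP H Y → synthP H (msg.MPair X Y)
  | Cry : ∀ K X, synthP H X → msg.Key K ∈ H → synthP H (msg.Crypt K X)

/-- `synth H`: messages that can be synthesized from `H`. -/
def synth (H : Set msg) : Set msg := {X | synthP H X}

inductive guardP (invKey : ℕ → ℕ) (n : ℕ) (Ks : Set ℕ) : msg → Prop
  | No_Nonce : ∀ X, msg.Nonce n ∉ parts {X} → guardP invKey n Ks X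
  | Guard : ∀ K X, invKey K ∈ Ks → guardP invKey n Ks (msg.Crypt K X)
  | Cry : ∀ K X, guardP invKey n Ks X → guardP invKey n Ks (msg.Crypt K X)
  | Pr : ∀ X Y, guardP invKey n Ks X → guardP invKey n Ks Y →
      guardP invKey n Ks (msg.MPair X Y)

/-- `guard n Ks`: messages in which `Nonce n` is guarded by the keys of `Ks`. -/
def guardMsg (invKey : ℕ → ℕ) (n : ℕ) (Ks : Set ℕ) : Set msg := {X | guardP invKey n Ks X}

/-- `Guard n Ks H`: every message of `H` lies in `guard n Ks`. -/
def Guard (invKey : ℕ → ℕ) (n : ℕ) (Ks : Set ℕ) (H : Set msg) : Prop :=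
  ∀ X ∈ H, X ∈ guardMsg invKey n Ks
inductive event : Type
  | Says : agent → agent → msg → event
deriving DecidableEq

def msgOf : event → msg
  | event.Says _ _ X => X

/-- Set of messages sent in a trace. -/
def sent (evs : List event) : Set msg :=
  {X | ∃ A B, event.Says A B X ∈ evs}
/-- Private key of an agent: the inverse of its public key. -/
def priK (invKey : ℕ → ℕ) (pubK : agent → ℕ) (A : agent) : ℕ := invKey (pubK A)

/-- Initial knowledge of each agent in a public-key infrastructure:
every agent knows its own private key and all public keys; the spy moreover
knows the private keys of the bad agents. -/
def initStatePK (invKey : ℕ → ℕ) (pubK : agent → ℕ) (bad : Set agent) : agent → Set msg :=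
  fun A =>
    match A with
    | agent.Spy =>
        {X | ∃ B ∈ bad, X = msg.Key (priK invKey pubK B)} ∪ {X | ∃ B, X = msg.Key (pubK B)}
    | _ => {msg.Key (priK invKey pubK A)} ∪ {X | ∃ B, X = msg.Key (pubK B)}

/-- `spies evs`: the private keys of the bad agents, all public keys, and
every message sent in `evs`. -/
def spiesPK (invKey : ℕ → ℕ) (pubK : agent → ℕ) (bad : Set agent) (evs : List event) :
    Set msg :=
  initStatePK invKey pubK bad agent.Spy ∪ sent evs

/-- `used evs`: parts of all agents' initial knowledge and of all messages sent in `evs`. -/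
def usedPK (invKey : ℕ → ℕ) (pubK : agent → ℕ) (bad : Set agent) (evs : List event) :
    Set msg :=
  parts ((⋃ A, initStatePK invKey pubK bad A) ∪ sent evs)
/-- The Needham–Schroeder–Lowe protocol. -/
inductive nsl (invKey : ℕ → ℕ) (pubK : agent → ℕ) (bad : Set agent) : List event → Prop
  | Nil : nsl invKey pubK bad []
  | Fake : ∀ evs B X, nsl invKey pubK bad evs →
      X ∈ synth (analz invKey (spiesPK invKey pubK bad evs)) →
      nsl invKey pubK bad (event.Says agent.Spy B X :: evs)
  | NS1 : ∀ evs A B NA, nsl invKey pubK bad evs →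
      msg.Nonce NA ∉ usedPK invKey pubK bad evs →
      nsl invKey pubK bad
        (event.Says A B (msg.Crypt (pubK B) (msg.MPair (msg.Nonce NA) (msg.Agent A))) :: evs)
  | NS2 : ∀ evs A A' B NA NB, nsl invKey pubK bad evs →
      msg.Nonce NB ∉ usedPK invKey pubK bad evs →
      event.Says A' B (msg.Crypt (pubK B) (msg.MPair (msg.Nonce NA) (msg.Agent A))) ∈ evs →
      nsl invKey pubK bad
        (event.Says B A (msg.Crypt (pubK A)
          (msg.MPair (msg.Nonce NA) (msg.MPair (msg.Nonce NB) (msg.Agent B)))) :: evs)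
  | NS3 : ∀ evs A B B' NA NB, nsl invKey pubK bad evs →
      event.Says A B (msg.Crypt (pubK B) (msg.MPair (msg.Nonce NA) (msg.Agent A))) ∈ evs →
      event.Says B' A (msg.Crypt (pubK A)
        (msg.MPair (msg.Nonce NA) (msg.MPair (msg.Nonce NB) (msg.Agent B)))) ∈ evs →
      nsl invKey pubK bad (event.Says A B (msg.Crypt (pubK B) (msg.Nonce NB)) :: evs)

def nokey (k : ℕ) : msg → Prop
  | msg.Key k' => k' ≠ k
  | msg.MPair X Y => nokey k X ∧ nokey k Y
  | msg.Crypt _ X => nokey k X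
  | _ => True

def okm (KA KB : ℕ) (NA NB : ℕ) (B : agent) (P : Prop) : msg → Prop
  | msg.Nonce n => n ≠ NB
  | msg.MPair X Y => okm KA KB NA NB B P X ∧ okm KA KB NA NB B P Y
  | msg.Crypt K X => okm KA KB NA NB B P X ∨
      (K = KA ∧ X = msg.MPair (msg.Nonce NA) (msg.MPair (msg.Nonce NB) (msg.Agent B))) ∨
      (K = KB ∧ X = msg.Nonce NB ∧ P)
  | _ => True

theorem okm_mono {KA KB NA NB : ℕ} {B : agent} {P Q : Prop} (h : P → Q) (X : msg)
    (hX : okm KA KB NA NB B P X) : okm KA KB NA NB B Q X := by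
  induction X with
  | MPair X Y ihX ihY => exact ⟨ihX hX.1, ihY hX.2⟩
  | Crypt K X ih =>
    rcases hX with hX | hX | hX
    · exact Or.inl (ih hX)
    · exact Or.inr (Or.inl hX)
    · exact Or.inr (Or.inr ⟨hX.1, hX.2.1, h hX.2.2⟩)
  | _ => exact hX

theorem okm_of_parts {KA KB NA NB : ℕ} {B : agent} {P : Prop} {H : Set msg}
    (hN : msg.Nonce NB ∉ parts H) (X : msg) (hX : partsP H X) : okm KA KB NA NB B P X := by
  induction X with
  | Nonce n => rintro rfl; exact hN hX
  | MPair X Y ihX ihY => exact ⟨ihX (.Fst _ _ hX), ihY (.Snd _ _ hX)⟩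
  | Crypt K X ih => exact Or.inl (ih (.Body _ _ hX))
  | _ => trivial

theorem nokey_analz {invKey : ℕ → ℕ} {k : ℕ} {H : Set msg} (hH : ∀ X ∈ H, nokey k X)
    (X : msg) (hX : analzP invKey H X) : nokey k X := by
  induction hX with
  | Inj X h => exact hH X h
  | Fst X Y _ ih => exact ih.1
  | Snd X Y _ ih => exact ih.2
  | Decrypt K X _ _ ih _ => exact ih

theorem nokey_synth {k : ℕ} {H : Set msg} (hH : ∀ X ∈ H, nokey k X)
    (X : msg) (hX : synthP H X) : nokey k X := by
  induction hX with
  | Inj X h => exact hH X h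
  | Pr X Y _ _ ihX ihY => exact ⟨ihX, ihY⟩
  | Cry K X _ _ ih => exact ih
  | _ => trivial

theorem okm_analz {invKey : ℕ → ℕ} {KA KB NA NB : ℕ} {B : agent} {P : Prop} {H : Set msg}
    (hA : ∀ X ∈ H, nokey (invKey KA) X) (hB : ∀ X ∈ H, nokey (invKey KB) X)
    (hH : ∀ X ∈ H, okm KA KB NA NB B P X)
    (X : msg) (hX : analzP invKey H X) : okm KA KB NA NB B P X := by
  induction hX with
  | Inj X h => exact hH X h
  | Fst X Y _ ih => exact ih.1
  | Snd X Y _ ih => exact ih.2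
  | Decrypt K X _ hk ih _ =>
    rcases ih with h | h | h
    · exact h
    · exact absurd (by rw [h.1]) (nokey_analz hA _ hk)
    · exact absurd (by rw [h.1]) (nokey_analz hB _ hk)

theorem okm_synth {KA KB NA NB : ℕ} {B : agent} {P : Prop} {H : Set msg}
    (hH : ∀ X ∈ H, okm KA KB NA NB B P X)
    (X : msg) (hX : synthP H X) : okm KA KB NA NB B P X := by
  induction hX with
  | Inj X h => exact hH X h
  | Pr X Y _ _ ihX ihY => exact ⟨ihX, ihY⟩
  | Cry K X _ _ ih => exact Or.inl ih
  | _ => trivial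

theorem nokey_spies {invKey : ℕ → ℕ} {pubK : agent → ℕ} {bad : Set agent}
    (hpri : Function.Injective (priK invKey pubK))
    (hpubpri : ∀ A B : agent, pubK A ≠ priK invKey pubK B)
    {A : agent} (hA : A ∉ bad) {evs : List event} (hevs : nsl invKey pubK bad evs) :
    ∀ X ∈ spiesPK invKey pubK bad evs, nokey (invKey (pubK A)) X := by
  have init : ∀ X ∈ initStatePK invKey pubK bad agent.Spy, nokey (invKey (pubK A)) X := by
    rintro X (⟨C, hC, rfl⟩ | ⟨C, rfl⟩)
    · intro h
      exact hA (hpri h ▸ hC)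
    · exact hpubpri C A
  induction hevs with
  | Nil =>
    rintro X (h | ⟨_, _, h⟩)
    · exact init X h
    · cases h
  | Fake evs C Y _ hY ih =>
    rintro X (h | ⟨D, E, h⟩)
    · exact init X h
    · rcases List.mem_cons.1 h with h | h
      · cases h
        exact nokey_synth (nokey_analz ih) _ hY
      · exact ih X (Or.inr ⟨D, E, h⟩)
  | NS1 evs _ _ _ _ _ ih =>
    rintro X (h | ⟨D, E, h⟩)
    · exact init X h
    · rcases List.mem_cons.1 h with h | h
      · cases h
        simp [nokey]
      · exact ih X (Or.inr ⟨D, E, h⟩)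
  | NS2 evs _ _ _ _ _ _ _ _ ih =>
    rintro X (h | ⟨D, E, h⟩)
    · exact init X h
    · rcases List.mem_cons.1 h with h | h
      · cases h
        simp [nokey]
      · exact ih X (Or.inr ⟨D, E, h⟩)
  | NS3 evs _ _ _ _ _ _ _ _ ih =>
    rintro X (h | ⟨D, E, h⟩)
    · exact init X h
    · rcases List.mem_cons.1 h with h | h
      · cases h
        simp [nokey]
      · exact ih X (Or.inr ⟨D, E, h⟩)

theorem nonce_used {invKey : ℕ → ℕ} {pubK : agent → ℕ} {bad : Set agent} {evs : List event}
    {A B C : agent} {NA NB K : ℕ}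
    (h : event.Says B A (msg.Crypt K
      (msg.MPair (msg.Nonce NA) (msg.MPair (msg.Nonce NB) (msg.Agent C)))) ∈ evs) :
    msg.Nonce NB ∈ usedPK invKey pubK bad evs :=
  .Fst _ _ (.Snd _ _ (.Body _ _ (.Inj _ (Or.inr ⟨_, _, h⟩))))

theorem okm_sent {invKey : ℕ → ℕ} {pubK : agent → ℕ} {bad : Set agent}
    (hpub : Function.Injective pubK)
    (hpri : Function.Injective (priK invKey pubK))
    (hpubpri : ∀ A B : agent, pubK A ≠ priK invKey pubK B)
    (hspy : agent.Spy ∈ bad)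
    {A B : agent} {NA NB : ℕ} (hA : A ∉ bad) (hB : B ∉ bad)
    {evs : List event} (hevs : nsl invKey pubK bad evs)
    (h2 : event.Says B A (msg.Crypt (pubK A)
      (msg.MPair (msg.Nonce NA) (msg.MPair (msg.Nonce NB) (msg.Agent B)))) ∈ evs) :
    ∀ D E X, event.Says D E X ∈ evs → okm (pubK A) (pubK B) NA NB B
      (event.Says A B (msg.Crypt (pubK B) (msg.MPair (msg.Nonce NA) (msg.Agent A))) ∈ evs) X := by
  induction hevs with
  | Nil => cases h2
  | Fake evs C Y hn hY ih =>
    rcases List.mem_cons.1 h2 with h2 | h2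
    · cases h2
      exact absurd hspy hB
    · have ih := ih h2
      intro D E X h
      refine okm_mono (List.mem_cons_of_mem _) X ?_
      rcases List.mem_cons.1 h with h | h
      · cases h
        refine okm_synth (okm_analz (nokey_spies hpri hpubpri hA hn)
          (nokey_spies hpri hpubpri hB hn) ?_) _ hY
        rintro X ((⟨C, hC, rfl⟩ | ⟨C, rfl⟩) | ⟨D, E, h⟩)
        · trivial
        · trivial
        · exact ih D E X h
      · exact ih D E X h
  | NS1 evs A1 B1 N1 hn hN ih =>
    rcases List.mem_cons.1 h2 with h2 | h2
    · cases h2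
    · have ih := ih h2
      intro D E X h
      refine okm_mono (List.mem_cons_of_mem _) X ?_
      rcases List.mem_cons.1 h with h | h
      · cases h
        refine Or.inl ⟨?_, trivial⟩
        rintro rfl
        exact hN (nonce_used h2)
      · exact ih D E X h
  | NS2 evs A1 A' B1 N1 N2 hn hN h1 ih =>
    intro D E X h
    refine okm_mono (List.mem_cons_of_mem _) X ?_
    rcases List.mem_cons.1 h2 with h2 | h2
    · cases h2
      rcases List.mem_cons.1 h with h | h
      · cases h
        exact Or.inr (Or.inl ⟨rfl, rfl⟩)
      · exact okm_of_parts hN X (.Inj _ (Or.inr ⟨_, _, h⟩))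
    · have ih := ih h2
      rcases List.mem_cons.1 h with h | h
      · cases h
        refine Or.inl ⟨?_, ?_, trivial⟩
        · rcases ih _ _ _ h1 with h | h | h
          · exact h.1
          · simp at h
          · simp at h
        · rintro rfl
          exact hN (nonce_used h2)
      · exact ih D E X h
  | NS3 evs A1 B1 B' N1 N2 hn h1 h1' ih =>
    rcases List.mem_cons.1 h2 with h2 | h2
    · cases h2
    · have ih := ih h2
      intro D E X h
      refine okm_mono (List.mem_cons_of_mem _) X ?_
      rcases List.mem_cons.1 h with h | h
      · cases h
        rcases ih _ _ _ h1' with h | h | h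
        · exact Or.inl h.2.1
        · obtain ⟨hk, hm⟩ := h
          have := hpub hk
          subst this
          cases hm
          exact Or.inr (Or.inr ⟨rfl, rfl, h1⟩)
        · simp at h
      · exact ih D E X h

/-- Authentication of the initiator in Needham–Schroeder–Lowe. -/
theorem nsl_authentication
    (invKey : ℕ → ℕ) (pubK : agent → ℕ) (bad : Set agent)
    (hinv : ∀ K, invKey (invKey K) = K)
    (hpub : Function.Injective pubK)
    (hpri : Function.Injective (priK invKey pubK))
    (hpubpri : ∀ A B : agent, pubK A ≠ priK invKey pubK B)
    (hspy : agent.Spy ∈ bad)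
    (evs : List event) (A A' B : agent) (NA NB : ℕ)
    (hevs : nsl invKey pubK bad evs) (hA : A ∉ bad) (hB : B ∉ bad)
    (h2 : event.Says B A (msg.Crypt (pubK A)
      (msg.MPair (msg.Nonce NA) (msg.MPair (msg.Nonce NB) (msg.Agent B)))) ∈ evs)
    (h3 : event.Says A' B (msg.Crypt (pubK B) (msg.Nonce NB)) ∈ evs) :
    event.Says A B (msg.Crypt (pubK B) (msg.MPair (msg.Nonce NA) (msg.Agent A))) ∈ evs := by
  rcases okm_sent hpub hpri hpubpri hspy hA hB hevs h2 _ _ _ h3 with h | h | h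
  · exact absurd rfl h
  · simp at h
  · exact h.2.2
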